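/- Let ℙ_n denote the distribution of the observed labeled graph (G, L) under the labeled stochastic block model 𝒢(n, a/n, b/n, μ, ν). For any fixed integer m ≥ 3, under ℙ_n the family of random variables {X_n([ℓ]_k) : [ℓ]_k ∈ 𝓛^k, 3 ≤ k ≤ m} converges jointly in distribution, as n → ∞, to a family of independent Poisson random variables, where the limit variable corresponding to [ℓ]_k = (ℓ₁,…,ℓ_k) has mean ξ([ℓ]_k) = (1/(2^{k+1}·k))·[∏_{i=1}^k (a·μ(ℓ_i) + b·ν(ℓ_i)) + ∏_{i=1}^k (a·μ(ℓ_i) − b·ν(ℓ_i))]. -/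

import Mathlib

open Finset Filter Real

namespace LSBM

/-- Ordered pairs `u < v` of vertices. -/
abbrev Pairs (n : ℕ) := {p : Fin n × Fin n // p.1 < p.2}

/-- A labeled-graph configuration: each pair `u < v` carries `none` (no edge)
or `some ℓ` (an edge with label `ℓ`). -/
abbrev EdgeConf (n : ℕ) (L : Type*) := Pairs n → Option L

variable {L : Type*}

/-- The label (if any) on the edge between `u` and `v`. -/
def getLabel {n : ℕ} (E : EdgeConf n L) (u v : Fin n) : Option L :=
  if h : u < v then E ⟨(u, v), h⟩ else if h' : v < u then E ⟨(v, u), h'⟩ else none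

/-- Per-pair mass under the labeled stochastic block model. -/
noncomputable def sbmPairMass (n : ℕ) (a b : ℝ) (μ ν : L → ℝ) (same : Bool) : Option L → ℝ
  | none => if same then 1 - a / n else 1 - b / n
  | some ℓ => if same then (a / n) * μ ℓ else (b / n) * ν ℓ

/-- Joint mass of a (type assignment, labeled graph) outcome under the labeled SBM. -/
noncomputable def sbmMass (n : ℕ) (a b : ℝ) (μ ν : L → ℝ)
    (x : (Fin n → Bool) × EdgeConf n L) : ℝ :=
  (1 / 2 : ℝ) ^ n *
    ∏ p : Pairs n, sbmPairMass n a b μ ν (x.1 p.1.1 == x.1 p.1.2) (x.2 p)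

/-- Probability of an event under the labeled SBM (joint in types and graph). -/
noncomputable def sbmProb [Fintype L] (n : ℕ) (a b : ℝ) (μ ν : L → ℝ)
    (A : Set ((Fin n → Bool) × EdgeConf n L)) : ℝ :=
  ∑ x : (Fin n → Bool) × EdgeConf n L, A.indicator (sbmMass n a b μ ν) x

/-- Probability of a labeled-graph event under the labeled SBM (marginal over types). -/
noncomputable def sbmGraphProb [Fintype L] (n : ℕ) (a b : ℝ) (μ ν : L → ℝ)
    (A : Set (EdgeConf n L)) : ℝ :=
  sbmProb n a b μ ν {x | x.2 ∈ A}

/-- Conditional (given the type assignment `σ`) probability of a labeled-graph event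
under the labeled SBM. -/
noncomputable def sbmCondProb [Fintype L] (n : ℕ) (a b : ℝ) (μ ν : L → ℝ)
    (σ : Fin n → Bool) (A : Set (EdgeConf n L)) : ℝ :=
  ∑ E : EdgeConf n L, A.indicator
    (fun E' => ∏ p : Pairs n, sbmPairMass n a b μ ν (σ p.1.1 == σ p.1.2) (E' p)) E

/-- Conditional (given `σ`) expectation of a function of the labeled graph. -/
noncomputable def sbmCondExp [Fintype L] (n : ℕ) (a b : ℝ) (μ ν : L → ℝ)
    (σ : Fin n → Bool) (f : EdgeConf n L → ℝ) : ℝ :=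
  ∑ E : EdgeConf n L,
    (∏ p : Pairs n, sbmPairMass n a b μ ν (σ p.1.1 == σ p.1.2) (E p)) * f E

/-- Per-pair mass under the labeled Erdős–Rényi model. -/
noncomputable def erPairMass (n : ℕ) (a b : ℝ) (μ ν : L → ℝ) : Option L → ℝ
  | none => 1 - (a + b) / (2 * n)
  | some ℓ => ((a + b) / (2 * n)) * ((a * μ ℓ + b * ν ℓ) / (a + b))

/-- Mass of a labeled graph under the labeled Erdős–Rényi model. -/
noncomputable def erMass [Fintype L] (n : ℕ) (a b : ℝ) (μ ν : L → ℝ) (E : EdgeConf n L) : ℝ :=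
  ∏ p : Pairs n, erPairMass n a b μ ν (E p)

/-- Probability of a labeled-graph event under the labeled Erdős–Rényi model. -/
noncomputable def erProb [Fintype L] (n : ℕ) (a b : ℝ) (μ ν : L → ℝ)
    (A : Set (EdgeConf n L)) : ℝ :=
  ∑ E : EdgeConf n L, A.indicator (erMass n a b μ ν) E

/-- Expectation of a function of the labeled graph under the labeled Erdős–Rényi model. -/
noncomputable def erExp [Fintype L] (n : ℕ) (a b : ℝ) (μ ν : L → ℝ)
    (f : EdgeConf n L → ℝ) : ℝ :=
  ∑ E : EdgeConf n L, erMass n a b μ ν E * f E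

/-- `μ` is a probability distribution on the (finite) label set. -/
def IsProbVec [Fintype L] (μ : L → ℝ) : Prop := (∀ ℓ, 0 ≤ μ ℓ) ∧ ∑ ℓ, μ ℓ = 1

/-- The reconstruction-threshold parameter `τ`. -/
noncomputable def tau [Fintype L] (a b : ℝ) (μ ν : L → ℝ) : ℝ :=
  ∑ ℓ, (a * μ ℓ - b * ν ℓ) ^ 2 / (2 * (a * μ ℓ + b * ν ℓ))

/-- The weighted adjacency matrix `W` with `W u v = A u v * w (L u v)`. -/
def Wmat {n : ℕ} (w : L → ℝ) (E : EdgeConf n L) : Matrix (Fin n) (Fin n) ℝ :=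
  fun u v => match getLabel E u v with
    | none => 0
    | some ℓ => w ℓ

/-- The ±1 vector associated with a Boolean type assignment (`true ↦ +1`). -/
def signVec {n : ℕ} (σ : Fin n → Bool) : Fin n → ℝ := fun u => if σ u then 1 else -1

/-- `x` is a vector with entries in `{±1}`. -/
def IsSignVec {n : ℕ} (x : Fin n → ℝ) : Prop := ∀ u, x u = 1 ∨ x u = -1

/-- Componentwise sign of a real vector. -/
noncomputable def signR {n : ℕ} (x : Fin n → ℝ) : Fin n → ℝ :=
  fun u => if 0 ≤ x u then 1 else -1

open Classical in
/-- Hamming distance between two vectors. -/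
noncomputable def hamming {n : ℕ} (x y : Fin n → ℝ) : ℕ :=
  (univ.filter fun u => x u ≠ y u).card

/-- The overlap `Q(x, y) = 1/2 - (1/n) min(d(x,y), d(x,-y))`. -/
noncomputable def overlap (n : ℕ) (x y : Fin n → ℝ) : ℝ :=
  1 / 2 - (1 / n) * min (hamming x y : ℝ) (hamming x (-y) : ℝ)

open Classical in
/-- The weight of the cut induced by a ±1 assignment `σ`:
`∑_{(u,v) : u < v, σ_u ≠ σ_v} W_{uv}`. -/
noncomputable def cutWeight {n : ℕ} (w : L → ℝ) (E : EdgeConf n L) (σ : Fin n → ℝ) : ℝ :=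
  ∑ p : Pairs n, if σ p.1.1 ≠ σ p.1.2 then Wmat w E p.1.1 p.1.2 else 0

/-- The quadratic form `xᵀ M x`. -/
def quadForm {n : ℕ} (M : Matrix (Fin n) (Fin n) ℝ) (x : Fin n → ℝ) : ℝ :=
  ∑ u, ∑ v, x u * M u v * x v

/-- The entrywise inner product `⟨A, B⟩ = ∑_{u,v} A u v * B u v`. -/
def mInner {n : ℕ} (A B : Matrix (Fin n) (Fin n) ℝ) : ℝ :=
  ∑ u, ∑ v, A u v * B u v

/-- The degree of a vertex. -/
def degree {n : ℕ} (E : EdgeConf n L) (u : Fin n) : ℕ :=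
  (univ.filter fun v => (getLabel E u v).isSome).card

open Classical in
/-- The weighted adjacency matrix of the graph obtained by removing all edges incident
to vertices of degree larger than `(3/2)·(a+b)/2`. -/
noncomputable def prunedW {n : ℕ} (a b : ℝ) (w : L → ℝ) (E : EdgeConf n L) :
    Matrix (Fin n) (Fin n) ℝ :=
  fun u v =>
    if (degree E u : ℝ) ≤ (3 / 2) * ((a + b) / 2) ∧
       (degree E v : ℝ) ≤ (3 / 2) * ((a + b) / 2)
    then Wmat w E u v else 0

/-- The conditional (given `σ`) entrywise expectation `E[W | σ]` of the weighted
adjacency matrix. -/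
noncomputable def condEW {n : ℕ} [Fintype L] (a b : ℝ) (μ ν w : L → ℝ)
    (σ : Fin n → Bool) : Matrix (Fin n) (Fin n) ℝ :=
  fun u v =>
    if u = v then 0
    else if σ u = σ v then (a / n) * ∑ ℓ, μ ℓ * w ℓ
    else (b / n) * ∑ ℓ, ν ℓ * w ℓ

/-- The matrix `D' = W' - (α/n) J` used in the spectral method, where
`α = (1/2)·∑_ℓ w(ℓ)(aμ(ℓ)+bν(ℓ))` and `J` is the all-one matrix. -/
noncomputable def Dmat {n : ℕ} [Fintype L] (a b : ℝ) (μ ν w : L → ℝ)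
    (E : EdgeConf n L) : Matrix (Fin n) (Fin n) ℝ :=
  fun u v => prunedW a b w E u v - ((1 / 2) * ∑ ℓ, w ℓ * (a * μ ℓ + b * ν ℓ)) / n

/-- The spectral norm (ℓ²-operator norm) of a real square matrix. -/
noncomputable def specNorm {n : ℕ} (M : Matrix (Fin n) (Fin n) ℝ) : ℝ :=
  ‖Matrix.toEuclideanCLM (𝕜 := ℝ) M‖

/-- The number of `k`-cycles carrying the label sequence `ℓ`, in the canonical
orientation: starting from the minimal-index vertex of the cycle toward its
neighbor of smaller index. -/
def cycleCount [DecidableEq L] (n k : ℕ) (E : EdgeConf n L) (ℓ : Fin k → L) : ℕ :=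
  if hk : 0 < k then
    haveI : NeZero k := ⟨hk.ne'⟩
    (univ.filter fun c : Fin k → Fin n =>
      Function.Injective c ∧ (∀ i, c 0 ≤ c i) ∧
      c 1 < c ⟨k - 1, Nat.sub_lt hk one_pos⟩ ∧
      ∀ i : Fin k, getLabel E (c i) (c (i + 1)) = some (ℓ i)).card
  else 0

/-- The Poisson probability mass function. -/
noncomputable def poissonPMF (m : ℝ) (j : ℕ) : ℝ :=
  Real.exp (-m) * m ^ j / (Nat.factorial j)

/-- The mean cycle count `λ([ℓ]_k)` under the labeled Erdős–Rényi model. -/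
noncomputable def lamER [Fintype L] (a b : ℝ) (μ ν : L → ℝ) {k : ℕ} (ℓ : Fin k → L) : ℝ :=
  (1 / ((2 : ℝ) ^ (k + 1) * k)) * ∏ i, (a * μ (ℓ i) + b * ν (ℓ i))

/-- The mean cycle count `ξ([ℓ]_k)` under the labeled SBM. -/
noncomputable def xiSBM [Fintype L] (a b : ℝ) (μ ν : L → ℝ) {k : ℕ} (ℓ : Fin k → L) : ℝ :=
  (1 / ((2 : ℝ) ^ (k + 1) * k)) *
    (∏ i, (a * μ (ℓ i) + b * ν (ℓ i)) + ∏ i, (a * μ (ℓ i) - b * ν (ℓ i)))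

/-- The per-pair likelihood-ratio factor `W_{uv}(G, L, σ)` (SBM versus labeled
Erdős–Rényi), as a function of the pair status (`same` type or not) and the
edge/label information on the pair. -/
noncomputable def likPair (n : ℕ) (a b : ℝ) (μ ν : L → ℝ) (same : Bool) :
    Option L → ℝ
  | some ℓ =>
      if same then 2 * a * μ ℓ / (a * μ ℓ + b * ν ℓ)
      else 2 * b * ν ℓ / (a * μ ℓ + b * ν ℓ)
  | none =>
      if same then (1 - a / n) / (1 - (a + b) / (2 * n))
      else (1 - b / n) / (1 - (a + b) / (2 * n))

/-- The likelihood ratio `Y_n = ℙ_n / ℙ'_n` of the labeled SBM with respect to the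
labeled Erdős–Rényi model. -/
noncomputable def Ylik [Fintype L] (n : ℕ) (a b : ℝ) (μ ν : L → ℝ)
    (E : EdgeConf n L) : ℝ :=
  (1 / 2 : ℝ) ^ n * ∑ σ : Fin n → Bool,
    ∏ p : Pairs n, likPair n a b μ ν (σ p.1.1 == σ p.1.2) (E p)


/-! ### Moment method -/

lemma choose_trunc (y J : ℕ) :
    |(if y = 0 then (1:ℝ) else 0) - ∑ j ∈ range J, (-1:ℝ)^j * (y.choose j : ℝ)| ≤ y.choose J := by
  rcases y with _ | z
  · rcases J with _ | J
    · simp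
    · rw [Finset.sum_range_succ']
      simp
  · have h : ∀ J : ℕ, ∑ j ∈ range (J+1), (-1:ℝ)^j * ((z+1).choose j : ℝ)
        = (-1)^J * (z.choose J : ℝ) := by
      intro J
      induction J with
      | zero => simp
      | succ J ih =>
        rw [Finset.sum_range_succ, ih, Nat.choose_succ_succ]
        push_cast
        ring
    rcases J with _ | J
    · simp
    · rw [h, if_neg (Nat.succ_ne_zero z), zero_sub, abs_neg, abs_mul, abs_pow, abs_neg, abs_one,
        one_pow, one_mul, Nat.abs_cast]
      rw [Nat.choose_succ_succ]
      push_cast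
      linarith [Nat.cast_nonneg (α := ℝ) (z.choose (J+1))]

lemma desc_split (x t j : ℕ) : (x.descFactorial (t + j) : ℝ) / (t.factorial * j.factorial)
    = (x.choose t : ℝ) * ((x - t).choose j : ℝ) := by
  have h : x.descFactorial (t+j) = x.descFactorial t * (x - t).descFactorial j := by
    induction j with
    | zero => simp
    | succ j ih =>
      rw [← add_assoc, Nat.descFactorial_succ, ih, Nat.descFactorial_succ, Nat.sub_sub]
      ring
  rw [h, Nat.descFactorial_eq_factorial_mul_choose, Nat.descFactorial_eq_factorial_mul_choose]
  have := Nat.factorial_pos t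
  have := Nat.factorial_pos j
  push_cast
  field_simp

lemma ind_trunc (x t J : ℕ) :
    |(if x = t then (1:ℝ) else 0) -
      ∑ j ∈ range J, ((-1:ℝ)^j / (t.factorial * j.factorial)) * (x.descFactorial (t+j) : ℝ)|
      ≤ (1 / (t.factorial * J.factorial)) * (x.descFactorial (t+J) : ℝ) := by
  have e : ∀ j, ((-1:ℝ)^j / (t.factorial * j.factorial)) * (x.descFactorial (t+j) : ℝ)
      = (x.choose t : ℝ) * ((-1:ℝ)^j * ((x-t).choose j : ℝ)) := by
    intro j
    have := desc_split x t j
    calc _ = (-1:ℝ)^j * ((x.descFactorial (t + j) : ℝ) / (t.factorial * j.factorial)) := by ring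
      _ = _ := by rw [this]; ring
  have e2 : (1 / (t.factorial * J.factorial)) * (x.descFactorial (t+J) : ℝ)
      = (x.choose t : ℝ) * ((x - t).choose J : ℝ) := by rw [← desc_split]; ring
  rw [e2]
  simp_rw [e]
  rw [← Finset.mul_sum]
  by_cases hx : x < t
  · rw [Nat.choose_eq_zero_of_lt hx, if_neg hx.ne]; simp
  · push Not at hx
    have : (if x = t then (1:ℝ) else 0) = (x.choose t : ℝ) * (if x - t = 0 then (1:ℝ) else 0) := by
      by_cases h : x = t
      · subst h; simp
      · rw [if_neg h, if_neg (by omega)]; simp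
    rw [this, ← mul_sub, abs_mul, Nat.abs_cast]
    exact mul_le_mul_of_nonneg_left (choose_trunc _ _) (Nat.cast_nonneg _)

lemma prod_diff {I : Type*} (s : Finset I) (A B C D : I → ℝ)
    (hB : ∀ i, |B i| ≤ C i) (hD : ∀ i, |A i - B i| ≤ D i) :
    |∏ i ∈ s, A i - ∏ i ∈ s, B i| ≤ ∏ i ∈ s, (C i + D i) - ∏ i ∈ s, C i := by
  classical
  have hC : ∀ i, 0 ≤ C i := fun i => (abs_nonneg _).trans (hB i)
  have hD0 : ∀ i, 0 ≤ D i := fun i => (abs_nonneg _).trans (hD i)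
  induction s using Finset.induction_on with
  | empty => simp
  | insert i s hi ih =>
    rw [prod_insert hi, prod_insert hi, prod_insert hi, prod_insert hi]
    have hA : |A i| ≤ C i + D i := by
      have := abs_add_le (B i) (A i - B i)
      rw [add_sub_cancel] at this
      linarith [hB i, hD i]
    have hBp : |∏ i ∈ s, B i| ≤ ∏ i ∈ s, C i := by
      rw [Finset.abs_prod]
      exact Finset.prod_le_prod (fun _ _ => abs_nonneg _) (fun j _ => hB j)
    calc |A i * ∏ i ∈ s, A i - B i * ∏ i ∈ s, B i|
        = |A i * (∏ i ∈ s, A i - ∏ i ∈ s, B i) + (A i - B i) * ∏ i ∈ s, B i| := by ring_nf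
      _ ≤ |A i| * |∏ i ∈ s, A i - ∏ i ∈ s, B i| + |A i - B i| * |∏ i ∈ s, B i| := by
          rw [← abs_mul, ← abs_mul]; exact abs_add_le _ _
      _ ≤ (C i + D i) * (∏ i ∈ s, (C i + D i) - ∏ i ∈ s, C i) + D i * ∏ i ∈ s, C i := by
          have h1 : 0 ≤ ∏ i ∈ s, C i := Finset.prod_nonneg fun j _ => hC j
          gcongr
          · exact add_nonneg (hC i) (hD0 i)
          · exact hD0 i
          · exact hD i
      _ = _ := by ring

lemma tendsto_poly {I : Type*} [Fintype I] {Ω : ℕ → Type*} [∀ n, Fintype (Ω n)]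
    (w : ∀ n, Ω n → ℝ) (X : ∀ n, I → Ω n → ℕ) (lam : I → ℝ)
    (hmom : ∀ r : I → ℕ, Tendsto (fun n => ∑ ω, w n ω * ∏ i, ((X n i ω).descFactorial (r i) : ℝ))
      atTop (nhds (∏ i, lam i ^ r i)))
    (c : I → ℕ → ℝ) (t : I → ℕ) (J : ℕ) :
    Tendsto (fun n => ∑ ω, w n ω * ∏ i, ∑ j ∈ range J, c i j *
      ((X n i ω).descFactorial (t i + j) : ℝ)) atTop
      (nhds (∏ i, ∑ j ∈ range J, c i j * lam i ^ (t i + j))) := by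
  classical
  simp_rw [Finset.prod_univ_sum, Finset.mul_sum]
  have : ∀ n, (∑ ω, ∑ p ∈ Fintype.piFinset (fun _ : I => range J), w n ω *
      ∏ i, c i (p i) * ((X n i ω).descFactorial (t i + p i) : ℝ)) =
      ∑ p ∈ Fintype.piFinset (fun _ : I => range J), (∏ i, c i (p i)) * ∑ ω, w n ω *
      ∏ i, ((X n i ω).descFactorial (t i + p i) : ℝ) := by
    intro n
    rw [Finset.sum_comm]
    refine Finset.sum_congr rfl fun p _ => ?_
    rw [Finset.mul_sum]
    refine Finset.sum_congr rfl fun ω _ => ?_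
    rw [Finset.prod_mul_distrib]; ring
  simp_rw [this]
  refine tendsto_finsetSum _ fun p _ => ?_
  rw [Finset.prod_mul_distrib]
  exact (hmom fun i => t i + p i).const_mul _

lemma hasSum_coef (l s : ℝ) (t : ℕ) :
    Tendsto (fun J => ∑ j ∈ range J, (s ^ j / (t.factorial * j.factorial)) * l ^ (t + j)) atTop
      (nhds (Real.exp (s * l) * l ^ t / t.factorial)) := by
  have h := (NormedSpace.expSeries_div_hasSum_exp (s * l)).tendsto_sum_nat
  rw [← Real.exp_eq_exp_ℝ] at h
  have := h.const_mul (l ^ t / t.factorial)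
  convert this using 2 with J
  · rw [Finset.mul_sum]
    refine Finset.sum_congr rfl fun j _ => ?_
    rw [mul_pow, pow_add]
    field_simp
  · ring

lemma moment_method {I : Type*} [Fintype I] {Ω : ℕ → Type*} [∀ n, Fintype (Ω n)]
    (w : ∀ n, Ω n → ℝ) (hw : ∀ᶠ n in atTop, ∀ ω, 0 ≤ w n ω)
    (X : ∀ n, I → Ω n → ℕ) (lam : I → ℝ)
    (hmom : ∀ r : I → ℕ, Tendsto (fun n => ∑ ω, w n ω * ∏ i, ((X n i ω).descFactorial (r i) : ℝ))
      atTop (nhds (∏ i, lam i ^ r i))) (t : I → ℕ) :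
    Tendsto (fun n => ∑ ω, w n ω * ∏ i, (if X n i ω = t i then (1:ℝ) else 0)) atTop
      (nhds (∏ i, poissonPMF (lam i) (t i))) := by
  classical
  -- coefficient families
  let c : ℝ → I → ℕ → ℝ := fun s i j => s ^ j / ((t i).factorial * j.factorial)
  let P : ℝ → ℕ → ℕ → ℝ := fun s J n => ∑ ω, w n ω * ∏ i, ∑ j ∈ range J, c s i j *
      ((X n i ω).descFactorial (t i + j) : ℝ)
  let Q : ℝ → ℕ → ℝ := fun s J => ∏ i, ∑ j ∈ range J, c s i j * lam i ^ (t i + j)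
  have hPQ : ∀ s J, Tendsto (P s J) atTop (nhds (Q s J)) := fun s J =>
    tendsto_poly w X lam hmom (c s) t J
  have hQ : ∀ s, Tendsto (Q s) atTop
      (nhds (∏ i, (Real.exp (s * lam i) * lam i ^ t i / (t i).factorial))) := fun s =>
    tendsto_finsetProd _ fun i _ => hasSum_coef (lam i) s (t i)
  have hlim : ∏ i, poissonPMF (lam i) (t i) =
      ∏ i, (Real.exp ((-1) * lam i) * lam i ^ t i / (t i).factorial) := by
    simp [poissonPMF]
  rw [hlim]
  have key : ∀ J, ∀ᶠ n in atTop,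
      |(∑ ω, w n ω * ∏ i, (if X n i ω = t i then (1:ℝ) else 0)) - P (-1) J n|
        ≤ P 1 (J+1) n - P 1 J n := by
    intro J
    filter_upwards [hw] with n hn
    simp only [P]
    rw [← Finset.sum_sub_distrib, ← Finset.sum_sub_distrib]
    refine (Finset.abs_sum_le_sum_abs _ _).trans (Finset.sum_le_sum fun ω _ => ?_)
    rw [← mul_sub, ← mul_sub, abs_mul, abs_of_nonneg (hn ω)]
    refine mul_le_mul_of_nonneg_left ?_ (hn ω)
    simp_rw [Finset.sum_range_succ]
    refine prod_diff _ _ _ _ _ (fun i => ?_) (fun i => ?_)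
    · refine (Finset.abs_sum_le_sum_abs _ _).trans (Finset.sum_le_sum fun j _ => ?_)
      simp only [c]
      rw [abs_mul, abs_div, abs_pow, abs_neg, abs_one, Nat.abs_cast,
        abs_of_nonneg (by positivity : (0:ℝ) ≤ (t i).factorial * j.factorial)]
    · have := ind_trunc (X n i ω) (t i) J
      simpa [c] using this
  set Λ := ∏ i, (Real.exp ((-1) * lam i) * lam i ^ t i / (t i).factorial) with hΛ
  rw [Metric.tendsto_atTop']
  intro ε hε
  have h1 : Tendsto (fun J => |Q (-1) J - Λ|) atTop (nhds 0) := by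
    have := ((hQ (-1)).sub_const Λ).abs
    rwa [← hΛ, sub_self, abs_zero] at this
  have h2 : Tendsto (fun J => Q 1 (J+1) - Q 1 J) atTop (nhds 0) := by
    have := ((hQ 1).comp (tendsto_add_atTop_nat 1)).sub (hQ 1)
    simpa using this
  obtain ⟨J, hJ1, hJ2⟩ := ((h1.eventually_lt_const (show (0:ℝ) < ε/4 by linarith)).and
    (h2.eventually_lt_const (show (0:ℝ) < ε/4 by linarith))).exists
  have h3 : Tendsto (fun n => |P (-1) J n - Q (-1) J|) atTop (nhds 0) := by
    have := ((hPQ (-1) J).sub_const (Q (-1) J)).abs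
    simpa using this
  have h4 := (hPQ 1 (J+1)).sub (hPQ 1 J)
  have h5 := h4.eventually_lt_const hJ2
  have h6 := h3.eventually_lt_const (show (0:ℝ) < ε/4 by linarith)
  obtain ⟨N, hN⟩ := eventually_atTop.1 ((key J).and (h5.and h6))
  refine ⟨N, fun n hn => ?_⟩
  obtain ⟨k1, k2, k3⟩ := hN n hn.le
  rw [Real.dist_eq]
  have a1 := abs_sub_le (∑ ω, w n ω * ∏ i, (if X n i ω = t i then (1:ℝ) else 0)) (P (-1) J n) Λ
  have a2 := abs_sub_le (P (-1) J n) (Q (-1) J) Λ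
  linarith

/-! ### Finite product measures -/

lemma pi_prob {ι κ α : Type*} [Fintype ι] [Fintype κ] [DecidableEq κ] [Fintype α] [DecidableEq α]
    (w : κ → α → ℝ) (hw : ∀ k, ∑ x, w k x = 1) (e : ι → κ) (he : Function.Injective e)
    (y : ι → α) :
    ∑ E : κ → α, (∏ k, w k (E k)) * (if ∀ i, E (e i) = y i then (1:ℝ) else 0)
      = ∏ i, w (e i) (y i) := by
  classical
  have h1 : ∀ E : κ → α, (if ∀ i, E (e i) = y i then (1:ℝ) else 0)
      = ∏ k, ∏ i ∈ univ.filter (fun i => e i = k), (if E k = y i then (1:ℝ) else 0) := by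
    intro E
    have h2 : ∀ k, ∏ i ∈ univ.filter (fun i => e i = k), (if E k = y i then (1:ℝ) else 0)
        = ∏ i ∈ univ.filter (fun i => e i = k), (if E (e i) = y i then (1:ℝ) else 0) := by
      intro k
      refine Finset.prod_congr rfl fun i hi => ?_
      rw [(Finset.mem_filter.1 hi).2]
    simp_rw [h2]
    rw [Finset.prod_fiberwise, Finset.prod_boole]
    simp
  simp_rw [h1, ← Finset.prod_mul_distrib]
  have h3 := (Finset.prod_univ_sum (fun _ : κ => (univ : Finset α)) (fun k x => w k x *
    ∏ i ∈ univ.filter (fun i => e i = k), (if x = y i then (1:ℝ) else 0))).symm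
  rw [Fintype.piFinset_univ] at h3
  rw [h3, ← Finset.prod_fiberwise univ e]
  refine Finset.prod_congr rfl fun k _ => ?_
  by_cases hk : ∃ i, e i = k
  · obtain ⟨i, rfl⟩ := hk
    have : univ.filter (fun j => e j = e i) = {i} := by
      ext j; simp [he.eq_iff]
    rw [this]
    simp
  · have : univ.filter (fun j => e j = k) = ∅ := by
      ext j; simp; exact fun h => hk ⟨j, h⟩
    rw [this]
    simp [hw]

lemma pi_prob_le {κ α : Type*} [Fintype κ] [DecidableEq κ] [Fintype α]
    (w : κ → α → ℝ) (hw0 : ∀ k x, 0 ≤ w k x) (hw : ∀ k, ∑ x, w k x = 1)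
    (S : Finset κ) (G : α → Prop) [DecidablePred G] (ε : ℝ)
    (hε : ∀ k, ∑ x, (if G x then w k x else 0) ≤ ε) :
    ∑ E : κ → α, (∏ k, w k (E k)) * (if ∀ k ∈ S, G (E k) then (1:ℝ) else 0)
      ≤ ε ^ S.card := by
  classical
  have h1 : ∀ E : κ → α, (if ∀ k ∈ S, G (E k) then (1:ℝ) else 0)
      = ∏ k, (if k ∈ S then (if G (E k) then (1:ℝ) else 0) else 1) := by
    intro E
    rw [Finset.prod_ite_mem, Finset.univ_inter, Finset.prod_boole]
    congr
  simp_rw [h1, ← Finset.prod_mul_distrib]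
  have h3 := (Finset.prod_univ_sum (fun _ : κ => (univ : Finset α)) (fun k x => w k x *
    (if k ∈ S then (if G x then (1:ℝ) else 0) else 1))).symm
  rw [Fintype.piFinset_univ] at h3
  rw [h3]
  have : ε ^ S.card = ∏ k, (if k ∈ S then ε else 1) := by
    rw [Finset.prod_ite_mem, Finset.univ_inter, Finset.prod_const]
  rw [this]
  refine Finset.prod_le_prod (fun k _ => Finset.sum_nonneg fun x _ => ?_) fun k _ => ?_
  · have := hw0 k x
    split_ifs <;> simp [this]
  · by_cases hk : k ∈ S
    · simp only [hk, if_true]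
      refine le_trans (le_of_eq ?_) (hε k)
      refine Finset.sum_congr rfl fun x _ => ?_
      simp
    · simp [hk, hw]

/-! ### The trace formula -/

/-- sign -/
def sg (s : Bool) : ℝ := if s then 1 else -1

lemma path_sum (k : ℕ) : ∀ (p q : Fin k → ℝ),
    (∑ τ : Fin (k+1) → Bool, ∏ i : Fin k,
      (if (τ i.castSucc == τ i.succ) then p i else q i) = 2 * ∏ i, (p i + q i)) ∧
    (∑ τ : Fin (k+1) → Bool, sg (τ 0) * sg (τ (Fin.last k)) * ∏ i : Fin k,
      (if (τ i.castSucc == τ i.succ) then p i else q i) = 2 * ∏ i, (p i - q i)) := by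
  induction k with
  | zero =>
    intro p q
    constructor
    · simp
    · have : ∀ τ : Fin 1 → Bool, sg (τ 0) * sg (τ (Fin.last 0)) = 1 := by
        intro τ
        rw [show Fin.last 0 = 0 from rfl]
        cases τ 0 <;> simp [sg]
      simp_rw [this]; simp
  | succ k ih =>
    intro p q
    obtain ⟨h1, h2⟩ := ih (fun i => p i.succ) (fun i => q i.succ)
    constructor
    · rw [← (Fin.consEquiv (fun _ : Fin (k+2) => Bool)).sum_comp, Fintype.sum_prod_type_right]
      rw [Fin.prod_univ_succ (f := fun i => p i + q i), mul_left_comm, ← h1, Finset.mul_sum]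
      refine Finset.sum_congr rfl fun τ _ => ?_
      simp only [Fin.consEquiv_apply, Fin.prod_univ_succ, Fin.castSucc_zero, Fin.cons_zero,
        Fin.cons_succ, Fintype.sum_bool, ← Fin.succ_castSucc]
      cases τ 0 <;> simp <;> ring
    · rw [← (Fin.consEquiv (fun _ : Fin (k+2) => Bool)).sum_comp, Fintype.sum_prod_type_right]
      rw [Fin.prod_univ_succ (f := fun i => p i - q i), mul_left_comm, ← h2, Finset.mul_sum]
      refine Finset.sum_congr rfl fun τ _ => ?_
      simp only [Fin.consEquiv_apply, Fin.prod_univ_succ, Fin.castSucc_zero, Fin.cons_zero,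
        Fin.cons_succ, Fintype.sum_bool, ← Fin.succ_castSucc, ← Fin.succ_last]
      cases τ 0 <;> cases τ (Fin.last k) <;> simp [sg] <;> ring

lemma cycle_sum (k : ℕ) (p q : Fin (k+1) → ℝ) :
    ∑ τ : Fin (k+1) → Bool, ∏ i, (if (τ i == τ (i+1)) then p i else q i)
      = ∏ i, (p i + q i) + ∏ i, (p i - q i) := by
  obtain ⟨h1, h2⟩ := path_sum k (fun i => p i.castSucc) (fun i => q i.castSucc)
  have e : ∀ τ : Fin (k+1) → Bool, ∏ i, (if (τ i == τ (i+1)) then p i else q i)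
      = (p (Fin.last k) + q (Fin.last k)) / 2 * (∏ i : Fin k,
      (if (τ i.castSucc == τ i.succ) then p i.castSucc else q i.castSucc)) +
      (p (Fin.last k) - q (Fin.last k)) / 2 * (sg (τ 0) * sg (τ (Fin.last k)) * ∏ i : Fin k,
      (if (τ i.castSucc == τ i.succ) then p i.castSucc else q i.castSucc)) := by
    intro τ
    rw [Fin.prod_univ_castSucc]
    simp only [Fin.coeSucc_eq_succ, Fin.last_add_one]
    cases τ 0 <;> cases τ (Fin.last k) <;> simp [sg] <;> ring
  simp_rw [e]
  rw [Finset.sum_add_distrib, ← Finset.mul_sum, ← Finset.mul_sum, h1, h2,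
    Fin.prod_univ_castSucc, Fin.prod_univ_castSucc (fun i => p i - q i)]
  ring

/-! ### Canonical cycles -/

/-- Canonical vertex sequences of cycles of length `K + 3`. -/
def IsCan {n K : ℕ} (c : Fin (K+3) → Fin n) : Prop :=
  Function.Injective c ∧ (∀ i, c 0 ≤ c i) ∧ c 1 < c (-1)

instance {n K : ℕ} (c : Fin (K+3) → Fin n) : Decidable (IsCan c) := by
  unfold IsCan; infer_instance

lemma fin_one_ne (K : ℕ) : (1 : Fin (K+3)) ≠ -1 := by
  intro h
  have := congrArg Fin.val h
  simp at this

lemma fin_succ_ne_pred (K : ℕ) (i : Fin (K+3)) : i + 1 ≠ i - 1 := by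
  intro h
  rw [sub_eq_add_neg] at h
  exact fin_one_ne K (add_left_cancel h)

lemma ofNat_succ (K t : ℕ) : Fin.ofNat (K+3) (t+1) = Fin.ofNat (K+3) t + 1 := by
  ext
  simp [Fin.val_add]

lemma card_can (n K : ℕ) :
    (univ.filter fun c : Fin (K+3) → Fin n => IsCan c).card * (2 * (K+3))
      = n.descFactorial (K+3) := by
  classical
  set A0 := univ.filter fun c : Fin (K+3) → Fin n => Function.Injective c ∧ (∀ i, c 0 ≤ c i)
    with hA0
  set Inj := univ.filter fun c : Fin (K+3) → Fin n => Function.Injective c with hInj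
  have hI : Inj.card = n.descFactorial (K+3) := by
    have := Fintype.card_embedding_eq (α := Fin (K+3)) (β := Fin n)
    rw [Fintype.card_fin, Fintype.card_fin] at this
    rw [← this, hInj, ← Fintype.card_subtype]
    exact Fintype.card_congr (Equiv.subtypeInjectiveEquivEmbedding _ _)
  -- rotations
  let R : Fin (K+3) → Finset (Fin (K+3) → Fin n) := fun j =>
    univ.filter fun c => Function.Injective c ∧ (∀ i, c j ≤ c i)
  have hR : ∀ j, (R j).card = A0.card := by
    intro j
    refine Finset.card_equiv ((Equiv.addRight j).symm.arrowCongr (Equiv.refl _)) fun c => ?_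
    simp only [R, hA0, mem_filter, mem_univ, true_and]
    have e : ∀ i, ((Equiv.addRight j).symm.arrowCongr (Equiv.refl (Fin n))) c i = c (i + j) := by
      intro i; rfl
    constructor
    · rintro ⟨h1, h2⟩
      refine ⟨fun x y h => ?_, fun i => ?_⟩
      · rw [e, e] at h
        exact add_right_cancel (h1 h)
      · rw [e, e, zero_add]; exact h2 _
    · rintro ⟨h1, h2⟩
      refine ⟨fun x y h => ?_, fun i => ?_⟩
      · have := @h1 (x - j) (y - j) (by rw [e, e]; simpa using h)
        exact sub_left_inj.1 this
      · have := h2 (i - j)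
        rw [e, e] at this
        simpa using this
  have hU : Inj = univ.biUnion R := by
    ext c
    simp only [hInj, R, mem_filter, mem_univ, true_and, mem_biUnion]
    constructor
    · intro h
      obtain ⟨j, -, hj⟩ := Finset.exists_min_image (univ : Finset (Fin (K+3))) c ⟨0, mem_univ _⟩
      exact ⟨j, h, fun i => hj i (mem_univ _)⟩
    · rintro ⟨j, h, -⟩; exact h
  have hcard : Inj.card = (K+3) * A0.card := by
    rw [hU, Finset.card_biUnion]
    · simp [hR]
    · intro i _ j _ hij
      refine Finset.disjoint_left.2 ?_
      intro c h1 h2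
      simp only [R, mem_filter, mem_univ, true_and] at h1 h2
      exact hij (h1.1 (le_antisymm (h1.2 j) (h2.2 i)))
  have hA : A0.card = 2 * (univ.filter fun c : Fin (K+3) → Fin n => IsCan c).card := by
    rw [← Finset.card_filter_add_card_filter_not (s := A0) (p := fun c => c 1 < c (-1)), two_mul]
    congr 1
    · congr 1
      ext c
      rw [Finset.mem_filter, hA0, Finset.mem_filter, Finset.mem_filter, and_assoc, and_assoc]
      rfl
    · refine Finset.card_equiv ((Equiv.neg (Fin (K+3))).arrowCongr (Equiv.refl _)) fun c => ?_
      have e : ∀ i, ((Equiv.neg (Fin (K+3))).arrowCongr (Equiv.refl (Fin n))) c i = c (-i) := by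
        intro i; rfl
      rw [Finset.mem_filter, hA0, Finset.mem_filter, Finset.mem_filter]
      simp only [mem_univ, true_and, not_lt]
      unfold IsCan
      rw [e, e, e, neg_neg, neg_zero]
      constructor
      · rintro ⟨⟨h1, h2⟩, h3⟩
        refine ⟨fun x y h => ?_, fun i => ?_, ?_⟩
        · rw [e, e] at h; exact neg_injective (h1 h)
        · rw [e]; exact h2 _
        · exact lt_of_le_of_ne h3 fun h => fin_one_ne K (h1 h).symm
      · rintro ⟨h1, h2, h3⟩
        refine ⟨⟨fun x y h => ?_, fun i => ?_⟩, h3.le⟩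
        · have := @h1 (-x) (-y) (by rw [e, e]; simpa using h)
          exact neg_injective this
        · have := h2 (-i)
          rwa [e, neg_neg] at this
  rw [← hI, hcard, hA]; ring

/-! ### Families of cycles -/

/-- positions in a family of cycles -/
abbrev QT {J : Type*} (K : J → ℕ) := Σ x : J, Fin (K x + 3)

/-- next position -/
def nx {J : Type*} {K : J → ℕ} (q : QT K) : QT K := ⟨q.1, q.2 + 1⟩

/-- previous position -/
def pv {J : Type*} {K : J → ℕ} (q : QT K) : QT K := ⟨q.1, q.2 - 1⟩

lemma nx_pv {J : Type*} {K : J → ℕ} (q : QT K) : nx (pv q) = q := by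
  obtain ⟨x, i⟩ := q
  exact congrArg (Sigma.mk x) (sub_add_cancel i 1)

/-- periodic evaluation -/
def ev {J : Type*} {K : J → ℕ} {n : ℕ} (g : QT K → Fin n) (x : J) (t : ℕ) : Fin n :=
  g ⟨x, Fin.ofNat (K x + 3) t⟩

/-- adjacency in the union of the cycles -/
def cadj {J : Type*} {K : J → ℕ} {n : ℕ} (g : QT K → Fin n) (u v : Fin n) : Prop :=
  ∃ q : QT K, (g q = u ∧ g (nx q) = v) ∨ (g q = v ∧ g (nx q) = u)

lemma cadj_symm {J : Type*} {K : J → ℕ} {n : ℕ} {g : QT K → Fin n} {u v : Fin n}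
    (h : cadj g u v) : cadj g v u := by
  obtain ⟨q, h⟩ := h; exact ⟨q, h.symm⟩

instance {J : Type*} [Fintype J] {K : J → ℕ} {n : ℕ} (g : QT K → Fin n) (u v : Fin n) :
    Decidable (cadj g u v) := by
  unfold cadj; infer_instance

/-- the pairs which are edges of the union of the cycles -/
def edges {J : Type*} [Fintype J] {K : J → ℕ} {n : ℕ} (g : QT K → Fin n) : Finset (Pairs n) :=
  univ.filter fun p : Pairs n => cadj g p.1.1 p.1.2

lemma darts_card {J : Type*} [Fintype J] {K : J → ℕ} {n : ℕ} (g : QT K → Fin n)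
    (hirr : ∀ u, ¬ cadj g u u) :
    ∑ u : Fin n, (univ.filter fun v => cadj g u v).card = 2 * (edges g).card := by
  classical
  have h1 : ∑ u : Fin n, (univ.filter fun v => cadj g u v).card
      = (univ.filter fun p : Fin n × Fin n => cadj g p.1 p.2).card := by
    simp only [Finset.card_filter]
    rw [Fintype.sum_prod_type]
  have h2 : (edges g).card =
      (univ.filter fun p : Fin n × Fin n => cadj g p.1 p.2 ∧ p.1 < p.2).card := by
    rw [← Finset.card_map (Function.Embedding.subtype _)]
    congr 1
    ext p
    simp [edges]
  have h3 : (univ.filter fun p : Fin n × Fin n => cadj g p.1 p.2 ∧ p.2 < p.1).card =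
      (univ.filter fun p : Fin n × Fin n => cadj g p.1 p.2 ∧ p.1 < p.2).card := by
    refine Finset.card_equiv (Equiv.prodComm _ _) fun p => ?_
    simp only [mem_filter, mem_univ, true_and, Equiv.prodComm_apply, Prod.fst_swap, Prod.snd_swap]
    exact and_congr_left fun _ => ⟨cadj_symm, cadj_symm⟩
  have h4 : (univ.filter fun p : Fin n × Fin n => cadj g p.1 p.2) =
      (univ.filter fun p : Fin n × Fin n => cadj g p.1 p.2 ∧ p.1 < p.2) ∪
      (univ.filter fun p : Fin n × Fin n => cadj g p.1 p.2 ∧ p.2 < p.1) := by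
    ext p
    simp only [mem_filter, mem_univ, true_and, mem_union]
    constructor
    · intro h
      rcases lt_trichotomy p.1 p.2 with h' | h' | h'
      · exact Or.inl ⟨h, h'⟩
      · rw [h'] at h; exact absurd h (hirr _)
      · exact Or.inr ⟨h, h'⟩
    · rintro (h | h) <;> exact h.1
  rw [h1, h4, Finset.card_union_of_disjoint, h3, h2, two_mul]
  rw [Finset.disjoint_left]
  intro p hp hq
  simp only [mem_filter] at hp hq
  exact lt_asymm hp.2.2 hq.2.2

lemma edge_count {J : Type*} [Fintype J] {K : J → ℕ} {n : ℕ} (g : QT K → Fin n)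
    (hcan : ∀ x, IsCan (fun i => g ⟨x, i⟩))
    (hdist : ∀ x y, x ≠ y → K x = K y → ¬ ∀ t : ℕ, ev g x t = ev g y t)
    (hninj : ¬ Function.Injective g) :
    (univ.image g).card + 1 ≤ (edges g).card := by
  classical
  by_contra hcon
  push Not at hcon
  have hin : ∀ (x : J) (i j : Fin (K x + 3)), g ⟨x, i⟩ = g ⟨x, j⟩ → i = j :=
    fun x i j h => (hcan x).1 h
  have hne : ∀ q : QT K, g (nx q) ≠ g q := by
    rintro ⟨x, i⟩ h
    have := hin x _ _ h
    simp at this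
  have hirr : ∀ u, ¬ cadj g u u := by
    rintro u ⟨q, ⟨h1, h2⟩ | ⟨h1, h2⟩⟩ <;> exact hne q (h2.trans h1.symm)
  have hd := darts_card g hirr
  have hnp : ∀ q : QT K, g (nx q) ≠ g (pv q) := by
    rintro ⟨x, i⟩ h
    exact fin_succ_ne_pred _ _ (hin x _ _ h)
  have hsub : ∀ q : QT K, ({g (nx q), g (pv q)} : Finset (Fin n)) ⊆
      univ.filter fun v => cadj g (g q) v := by
    intro q v hv
    simp only [mem_insert, mem_singleton] at hv
    simp only [mem_filter, mem_univ, true_and]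
    rcases hv with rfl | rfl
    · exact ⟨q, Or.inl ⟨rfl, rfl⟩⟩
    · exact ⟨pv q, Or.inr ⟨rfl, by rw [nx_pv]⟩⟩
  have hge : ∀ u ∈ univ.image g, 2 ≤ (univ.filter fun v => cadj g u v).card := by
    intro u hu
    obtain ⟨q, -, rfl⟩ := Finset.mem_image.1 hu
    rw [← Finset.card_pair (hnp q)]
    exact Finset.card_le_card (hsub q)
  have hN : ∀ q : QT K, univ.filter (fun v => cadj g (g q) v) = {g (nx q), g (pv q)} := by
    intro q
    by_contra hq
    have hlt : 2 < (univ.filter fun v => cadj g (g q) v).card := by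
      rw [← Finset.card_pair (hnp q)]
      exact Finset.card_lt_card ((hsub q).ssubset_of_ne (Ne.symm hq))
    have h1 : ∑ u ∈ univ.image g, 2 < ∑ u ∈ univ.image g, (univ.filter fun v => cadj g u v).card :=
      Finset.sum_lt_sum hge ⟨g q, Finset.mem_image_of_mem _ (mem_univ _), hlt⟩
    have h2 : ∑ u ∈ univ.image g, (univ.filter fun v => cadj g u v).card ≤
        ∑ u, (univ.filter fun v => cadj g u v).card :=
      Finset.sum_le_sum_of_subset (Finset.subset_univ _)
    rw [Finset.sum_const, smul_eq_mul] at h1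
    omega
  have hN2 : ∀ q q' : QT K, g q = g q' → ∀ v, (v = g (nx q) ∨ v = g (pv q)) →
      (v = g (nx q') ∨ v = g (pv q')) := by
    intro q q' h v hv
    have h1 := hN q
    rw [h, hN q'] at h1
    have : v ∈ ({g (nx q), g (pv q)} : Finset (Fin n)) := by simpa using hv
    rw [← h1] at this
    simpa using this
  -- find two cycles meeting
  obtain ⟨⟨x, i⟩, ⟨y, j⟩, hq, hqne⟩ : ∃ q q', g q = g q' ∧ q ≠ q' := by
    simpa [Function.Injective] using hninj
  have hxy : x ≠ y := by
    rintro rfl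
    exact hqne (by rw [hin x i j hq])
  have hVsub : ∀ (x y : J) (i : Fin (K x + 3)) (j : Fin (K y + 3)), g ⟨x, i⟩ = g ⟨y, j⟩ →
      ∀ i', ∃ j', g ⟨x, i'⟩ = g ⟨y, j'⟩ := by
    intro x y i j h
    have : ∀ t : ℕ, ∃ j', g ⟨x, i + Fin.ofNat _ t⟩ = g ⟨y, j'⟩ := by
      intro t
      induction t with
      | zero => exact ⟨j, by rw [← h]; congr 2; ext; simp⟩
      | succ t ih =>
        obtain ⟨j', hj'⟩ := ih
        rcases hN2 _ _ hj' (g (nx ⟨x, i + Fin.ofNat _ t⟩)) (Or.inl rfl) with h' | h'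
        · refine ⟨j' + 1, ?_⟩
          rw [ofNat_succ, ← add_assoc]; exact h'
        · refine ⟨j' - 1, ?_⟩
          rw [ofNat_succ, ← add_assoc]; exact h'
    intro i'
    obtain ⟨j', hj'⟩ := this (i' - i).val
    rw [Fin.ofNat_val_eq_self, add_sub_cancel] at hj'
    exact ⟨j', hj'⟩
  have h0 : g ⟨x, 0⟩ = g ⟨y, 0⟩ := by
    obtain ⟨j', hj'⟩ := hVsub x y i j hq 0
    obtain ⟨i', hi'⟩ := hVsub y x j i hq.symm 0
    apply le_antisymm
    · rw [hi']; exact (hcan x).2.1 i'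
    · rw [hj']; exact (hcan y).2.1 j'
  have hx1 := (hcan x).2.2
  have hy1 := (hcan y).2.2
  have h1 : g ⟨x, 1⟩ = g ⟨y, 1⟩ := by
    have e1 := hN2 _ _ h0 (g ⟨x, 1⟩) (by left; simp [nx])
    have e2 := hN2 _ _ h0 (g ⟨x, -1⟩) (by right; simp [pv])
    simp only [nx, pv, zero_add, zero_sub] at e1 e2
    rcases e1 with e1 | e1
    · exact e1
    · rcases e2 with e2 | e2
      · simp only [e1, e2] at hx1
        exact absurd hx1 (lt_asymm hy1)
      · simp only [e1, e2] at hx1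
        exact absurd hx1 (lt_irrefl _)
  have hev : ∀ t : ℕ, ev g x t = ev g y t ∧ ev g x (t+1) = ev g y (t+1) := by
    intro t
    induction t with
    | zero =>
      simp only [ev, ofNat_succ]
      exact ⟨h0, by simpa [Fin.ofNat] using h1⟩
    | succ t ih =>
      refine ⟨ih.2, ?_⟩
      have e := hN2 _ _ ih.2 (ev g x (t+1+1)) (by left; simp only [ev, nx, ofNat_succ])
      have p1 : pv (⟨y, Fin.ofNat (K y + 3) (t+1)⟩ : QT K) = ⟨y, Fin.ofNat (K y + 3) t⟩ := by
        simp only [pv, ofNat_succ, add_sub_cancel_right]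
      have p2 : nx (⟨y, Fin.ofNat (K y + 3) (t+1)⟩ : QT K) = ⟨y, Fin.ofNat (K y + 3) (t+1+1)⟩ := by
        simp only [nx, ofNat_succ]
      rw [p1, p2] at e
      rcases e with e | e
      · exact e
      · exfalso
        have e' : ev g x (t+1+1) = ev g x t := e.trans ih.1.symm
        simp only [ev, ofNat_succ] at e'
        have := hin x _ _ e'
        exact fin_succ_ne_pred _ (Fin.ofNat (K x + 3) t + 1) (by rw [this, add_sub_cancel_right])
  have hK : ∀ x y : J, (∀ t : ℕ, ev g x t = ev g y t) → K y ≤ K x := by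
    intro x y h
    by_contra hlt
    push Not at hlt
    have e : ev g y (K x + 3) = ev g y 0 := by
      rw [← h, ← h]
      simp [ev, Fin.ofNat]
    have := congrArg Fin.val (hin y _ _ e)
    simp only [Fin.val_ofNat] at this
    rw [Nat.mod_eq_of_lt (by omega)] at this
    simp at this
  have hev' : ∀ t : ℕ, ev g x t = ev g y t := fun t => (hev t).1
  exact hdist x y hxy (le_antisymm (hK y x fun t => (hev' t).symm) (hK x y hev')) hev'

/-! ### Expectations under the block model -/

/-- Expectation of a function of the labeled graph. -/
noncomputable def Ex [Fintype L] (n : ℕ) (a b : ℝ) (μ ν : L → ℝ) (F : EdgeConf n L → ℝ) : ℝ :=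
  ∑ x : (Fin n → Bool) × EdgeConf n L, sbmMass n a b μ ν x * F x.2

lemma Ex_eq [Fintype L] (n : ℕ) (a b : ℝ) (μ ν : L → ℝ) (F : EdgeConf n L → ℝ) :
    Ex n a b μ ν F = ∑ σ : Fin n → Bool, (1/2:ℝ)^n * ∑ E : EdgeConf n L,
      (∏ p : Pairs n, sbmPairMass n a b μ ν (σ p.1.1 == σ p.1.2) (E p)) * F E := by
  unfold Ex
  rw [Fintype.sum_prod_type]
  refine Finset.sum_congr rfl fun σ _ => ?_
  rw [Finset.mul_sum]
  refine Finset.sum_congr rfl fun E _ => ?_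
  rw [sbmMass, mul_assoc]

lemma pairMass_sum [Fintype L] (n : ℕ) (a b : ℝ) (μ ν : L → ℝ) (hμ : IsProbVec μ)
    (hν : IsProbVec ν) (s : Bool) : ∑ o, sbmPairMass n a b μ ν s o = 1 := by
  rw [Fintype.sum_option]
  cases s <;> simp [sbmPairMass, ← Finset.mul_sum, hμ.2, hν.2]

lemma pairMass_nonneg [Fintype L] {n : ℕ} {a b : ℝ} (ha : 0 < a) (hb : 0 < b) {μ ν : L → ℝ}
    (hμ : IsProbVec μ) (hν : IsProbVec ν) (hna : a ≤ n) (hnb : b ≤ n) (s : Bool) (o : Option L) :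
    0 ≤ sbmPairMass n a b μ ν s o := by
  have hn : (0:ℝ) < n := lt_of_lt_of_le ha hna
  have h1 : a / n ≤ 1 := (div_le_one hn).2 hna
  have h2 : b / n ≤ 1 := (div_le_one hn).2 hnb
  have h3 : 0 ≤ a / n := by positivity
  have h4 : 0 ≤ b / n := by positivity
  cases s <;> cases o <;> simp [sbmPairMass]
  · linarith
  · exact mul_nonneg h4 (hν.1 _)
  · linarith
  · exact mul_nonneg h3 (hμ.1 _)

lemma mass_nonneg [Fintype L] {n : ℕ} {a b : ℝ} (ha : 0 < a) (hb : 0 < b) {μ ν : L → ℝ}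
    (hμ : IsProbVec μ) (hν : IsProbVec ν) (hna : a ≤ n) (hnb : b ≤ n)
    (x : (Fin n → Bool) × EdgeConf n L) : 0 ≤ sbmMass n a b μ ν x := by
  unfold sbmMass
  exact mul_nonneg (by positivity)
    (Finset.prod_nonneg fun p _ => pairMass_nonneg ha hb hμ hν hna hnb _ _)

/-- unordered pair -/
def mkpair {n : ℕ} (u v : Fin n) (h : u ≠ v) : Pairs n :=
  if h' : u < v then ⟨(u, v), h'⟩ else ⟨(v, u), lt_of_le_of_ne (not_lt.1 h') h.symm⟩

lemma getLabel_eq {n : ℕ} (E : EdgeConf n L) (u v : Fin n) (h : u ≠ v) :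
    getLabel E u v = E (mkpair u v h) := by
  unfold getLabel mkpair
  by_cases h' : u < v
  · rw [dif_pos h', dif_pos h']
  · have : v < u := lt_of_le_of_ne (not_lt.1 h') h.symm
    rw [dif_neg h', dif_neg h', dif_pos this]

lemma mkpair_beq {n : ℕ} (σ : Fin n → Bool) (u v : Fin n) (h : u ≠ v) :
    (σ (mkpair u v h).1.1 == σ (mkpair u v h).1.2) = (σ u == σ v) := by
  unfold mkpair
  by_cases h' : u < v
  · rw [dif_pos h']
  · rw [dif_neg h']; exact Bool.beq_comm

lemma mkpair_inj {n : ℕ} {u v u' v' : Fin n} {h : u ≠ v} {h' : u' ≠ v'}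
    (e : mkpair u v h = mkpair u' v' h') : (u = u' ∧ v = v') ∨ (u = v' ∧ v = u') := by
  unfold mkpair at e
  split_ifs at e <;> simp [Subtype.ext_iff, Prod.ext_iff] at e <;> tauto

/-- all cycles of the family are present with the right labels -/
def pres {J : Type*} {K : J → ℕ} {n : ℕ} (lab : QT K → L) (g : QT K → Fin n)
    (E : EdgeConf n L) : Prop :=
  ∀ q, getLabel E (g q) (g (nx q)) = some (lab q)

instance {J : Type*} [Fintype J] [DecidableEq L] {K : J → ℕ} {n : ℕ} (lab : QT K → L)
    (g : QT K → Fin n) (E : EdgeConf n L) : Decidable (pres lab g E) := by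
  unfold pres; infer_instance

lemma nx_ne {J : Type*} {K : J → ℕ} (q : QT K) : q ≠ nx q := by
  obtain ⟨x, i⟩ := q
  intro h
  simp [nx] at h

lemma nx_nx_ne {J : Type*} {K : J → ℕ} (q : QT K) : nx (nx q) ≠ q := by
  obtain ⟨x, i⟩ := q
  intro h
  have h' : i + 1 + 1 = i := eq_of_heq (Sigma.mk.inj_iff.1 h).2
  exact fin_succ_ne_pred _ (i + 1) (by rw [h', add_sub_cancel_right])

lemma disj_exp [Fintype L] [DecidableEq L] {J : Type*} [Fintype J] {K : J → ℕ} {n : ℕ}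
    (a b : ℝ) (μ ν : L → ℝ) (hμ : IsProbVec μ) (hν : IsProbVec ν)
    (lab : QT K → L) (g : QT K → Fin n) (hg : Function.Injective g) :
    Ex n a b μ ν (fun E => if pres lab g E then 1 else 0) =
      ∏ x : J, (1/2:ℝ)^(K x + 3) * (∏ i, (a / n * μ (lab ⟨x, i⟩) + b / n * ν (lab ⟨x, i⟩))
        + ∏ i, (a / n * μ (lab ⟨x, i⟩) - b / n * ν (lab ⟨x, i⟩))) := by
  classical
  have hne : ∀ q, g q ≠ g (nx q) := fun q h => nx_ne q (hg h)
  let e : QT K → Pairs n := fun q => mkpair (g q) (g (nx q)) (hne q)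
  have he : Function.Injective e := by
    intro q q' h
    rcases mkpair_inj h with ⟨h1, -⟩ | ⟨h1, h2⟩
    · exact hg h1
    · exfalso
      have h1 := hg h1
      have h2 := hg h2
      rw [← h2] at h1
      exact nx_nx_ne q h1.symm
  have hp : ∀ E : EdgeConf n L, pres lab g E ↔ ∀ q, E (e q) = some (lab q) := by
    intro E
    unfold pres
    refine forall_congr' fun q => ?_
    rw [getLabel_eq E _ _ (hne q)]
  let F : (QT K → Bool) → ℝ := fun τ => ∏ q, sbmPairMass n a b μ ν (τ q == τ (nx q)) (some (lab q))
  have h1 : ∀ σ : Fin n → Bool, ∑ E : EdgeConf n L,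
      (∏ p : Pairs n, sbmPairMass n a b μ ν (σ p.1.1 == σ p.1.2) (E p)) *
        (if pres lab g E then 1 else 0) = F (fun q => σ (g q)) := by
    intro σ
    simp_rw [hp]
    rw [pi_prob (fun p : Pairs n => sbmPairMass n a b μ ν (σ p.1.1 == σ p.1.2))
      (fun p => pairMass_sum n a b μ ν hμ hν _) e he (fun q => some (lab q))]
    refine Finset.prod_congr rfl fun q _ => ?_
    simp only [e]
    rw [mkpair_beq]
  rw [Ex_eq]
  simp_rw [h1]
  have h2 : ∀ σ : Fin n → Bool, F (fun q => σ (g q)) =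
      ∑ τ : QT K → Bool, F τ * (if ∀ q, σ (g q) = τ q then (1:ℝ) else 0) := by
    intro σ
    rw [Finset.sum_eq_single (fun q => σ (g q))]
    · simp
    · intro τ _ hτ
      rw [if_neg, mul_zero]
      intro h
      exact hτ (funext fun q => (h q).symm)
    · simp
  simp_rw [h2, Finset.mul_sum]
  rw [Finset.sum_comm]
  have h3 : ∀ τ : QT K → Bool, ∑ σ : Fin n → Bool, (1/2:ℝ)^n * (F τ *
      (if ∀ q, σ (g q) = τ q then (1:ℝ) else 0)) = (∏ _q : QT K, (1/2:ℝ)) * F τ := by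
    intro τ
    have := pi_prob (fun (_ : Fin n) (_ : Bool) => (1/2:ℝ)) (fun _ => by norm_num) g hg τ
    rw [← this, Finset.sum_mul]
    refine Finset.sum_congr rfl fun σ _ => ?_
    simp
  simp_rw [h3]
  have h4 : ∀ x : J, (1/2:ℝ)^(K x + 3) * (∏ i, (a / n * μ (lab ⟨x, i⟩) + b / n * ν (lab ⟨x, i⟩))
        + ∏ i, (a / n * μ (lab ⟨x, i⟩) - b / n * ν (lab ⟨x, i⟩))) =
      ∑ τ : Fin (K x + 3) → Bool, ∏ i, (1/2:ℝ) *
        sbmPairMass n a b μ ν (τ i == τ (i+1)) (some (lab ⟨x, i⟩)) := by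
    intro x
    have := cycle_sum (K x + 2) (fun i => a / n * μ (lab ⟨x, i⟩)) (fun i => b / n * ν (lab ⟨x, i⟩))
    rw [← this, Finset.mul_sum]
    refine Finset.sum_congr rfl fun τ _ => ?_
    rw [Finset.prod_mul_distrib, Finset.prod_const, Finset.card_univ, Fintype.card_fin]
    rfl
  simp_rw [h4]
  rw [Finset.prod_univ_sum, Fintype.piFinset_univ,
    ← (Equiv.piCurry (fun (x : J) (_ : Fin (K x + 3)) => Bool)).sum_comp]
  refine Finset.sum_congr rfl fun τ _ => ?_
  simp only [F]
  rw [← Finset.prod_mul_distrib, Fintype.prod_sigma]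
  rfl

lemma over_exp [Fintype L] [DecidableEq L] {J : Type*} [Fintype J] {K : J → ℕ} {n : ℕ}
    {a b : ℝ} (ha : 0 < a) (hb : 0 < b) {μ ν : L → ℝ} (hμ : IsProbVec μ) (hν : IsProbVec ν)
    (hna : a ≤ n) (hnb : b ≤ n)
    (lab : QT K → L) (g : QT K → Fin n) :
    Ex n a b μ ν (fun E => if pres lab g E then 1 else 0) ≤ ((a + b) / n) ^ (edges g).card := by
  classical
  have hn : (0:ℝ) < n := lt_of_lt_of_le ha hna
  have hp : ∀ E : EdgeConf n L, pres lab g E → ∀ p ∈ edges g, (E p).isSome := by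
    intro E hE p hp
    obtain ⟨⟨u, v⟩, huv⟩ := p
    simp only [edges, mem_filter, mem_univ, true_and] at hp
    obtain ⟨q, ⟨h1, h2⟩ | ⟨h1, h2⟩⟩ := hp
    · have := hE q
      rw [h1, h2] at this
      unfold getLabel at this
      rw [dif_pos huv] at this
      rw [this]; rfl
    · have := hE q
      rw [h1, h2] at this
      unfold getLabel at this
      have huv' : u < v := huv
      rw [dif_neg (not_lt.2 huv'.le), dif_pos huv] at this
      rw [this]; rfl
  rw [Ex_eq]
  have h1 : ∀ σ : Fin n → Bool, (1/2:ℝ)^n * ∑ E : EdgeConf n L,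
      (∏ p : Pairs n, sbmPairMass n a b μ ν (σ p.1.1 == σ p.1.2) (E p)) *
        (if pres lab g E then 1 else 0) ≤ (1/2:ℝ)^n * ((a + b) / n) ^ (edges g).card := by
    intro σ
    refine mul_le_mul_of_nonneg_left ?_ (by positivity)
    refine le_trans (Finset.sum_le_sum fun E _ => ?_)
      (pi_prob_le (fun p : Pairs n => sbmPairMass n a b μ ν (σ p.1.1 == σ p.1.2))
      (fun p x => pairMass_nonneg ha hb hμ hν hna hnb _ _)
      (fun p => pairMass_sum n a b μ ν hμ hν _) (edges g) (fun o => o.isSome = true)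
      ((a + b) / n) (fun p => ?_))
    · refine mul_le_mul_of_nonneg_left ?_
        (Finset.prod_nonneg fun p _ => pairMass_nonneg ha hb hμ hν hna hnb _ _)
      by_cases h : pres lab g E
      · rw [if_pos h, if_pos (hp E h)]
      · rw [if_neg h]; split_ifs <;> simp
    · rw [Fintype.sum_option]
      have h3 : 0 ≤ a / n := by positivity
      have h4 : 0 ≤ b / n := by positivity
      rw [add_div]
      cases (σ p.1.1 == σ p.1.2) <;> simp [sbmPairMass, ← Finset.mul_sum, hμ.2, hν.2, h3, h4]
  refine (Finset.sum_le_sum fun σ _ => h1 σ).trans (le_of_eq ?_)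
  simp

/-! ### Asymptotics -/

lemma cycleCount_eq [DecidableEq L] (n K : ℕ) (E : EdgeConf n L) (ℓ : Fin (K+3) → L) :
    cycleCount n (K+3) E ℓ = (univ.filter fun c : Fin (K+3) → Fin n =>
      IsCan c ∧ ∀ t, getLabel E (c t) (c (t+1)) = some (ℓ t)).card := by
  have h1 : (⟨K+3-1, Nat.sub_lt (Nat.succ_pos _) one_pos⟩ : Fin (K+3)) = -1 := by
    ext; simp
  unfold cycleCount
  rw [dif_pos (Nat.succ_pos _)]
  congr 1
  ext c
  rw [Finset.mem_filter, Finset.mem_filter, IsCan, ← h1, and_assoc, and_assoc]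

lemma tendsto_desc (k : ℕ) :
    Tendsto (fun n : ℕ => (n.descFactorial k : ℝ) / (n:ℝ)^k) atTop (nhds 1) := by
  refine (Asymptotics.isEquivalent_iff_tendsto_one ?_).1 (isEquivalent_descFactorial k)
  filter_upwards [eventually_gt_atTop 0] with n hn
  positivity

lemma card_inj (κ : Type*) [Fintype κ] [DecidableEq κ] (n : ℕ) :
    (univ.filter fun g : κ → Fin n => Function.Injective g).card
      = n.descFactorial (Fintype.card κ) := by
  have := Fintype.card_embedding_eq (α := κ) (β := Fin n)
  rw [Fintype.card_fin] at this
  rw [← this, ← Fintype.card_subtype]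
  exact Fintype.card_congr (Equiv.subtypeInjectiveEquivEmbedding _ _)

section fam

variable {J : Type*} [Fintype J] (K : J → ℕ)

open Classical in
/-- vertex-disjoint canonical families -/
noncomputable def setA (n : ℕ) : Finset (QT K → Fin n) :=
  univ.filter fun g => (∀ x, IsCan fun i => g ⟨x, i⟩) ∧ Function.Injective g

open Classical in
/-- overlapping canonical families of distinct cycles -/
noncomputable def setB (n : ℕ) : Finset (QT K → Fin n) :=
  univ.filter fun g => (∀ x, IsCan fun i => g ⟨x, i⟩) ∧
    (∀ x y, x ≠ y → K x = K y → ¬ ∀ t : ℕ, ev g x t = ev g y t) ∧ ¬ Function.Injective g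

lemma tendsto_setA : Tendsto (fun n : ℕ => ((setA K n).card : ℝ) / (n:ℝ)^(Fintype.card (QT K)))
    atTop (nhds (∏ x, (1 / (2 * ((K x : ℝ) + 3))))) := by
  classical
  have hq : Fintype.card (QT K) = ∑ x, (K x + 3) := by simp
  -- all canonical
  let C : ℕ → ℕ := fun n => (univ.filter fun g : QT K → Fin n => ∀ x, IsCan fun i => g ⟨x, i⟩).card
  have hC : ∀ n, C n = ∏ x, (univ.filter fun c : Fin (K x + 3) → Fin n => IsCan c).card := by
    intro n
    rw [← Fintype.card_piFinset]
    refine Finset.card_equiv (Equiv.piCurry (fun (x : J) (_ : Fin (K x + 3)) => Fin n)) fun g => ?_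
    rw [Finset.mem_filter, Fintype.mem_piFinset]
    simp only [mem_univ, true_and, mem_filter]
    rfl
  have hCt : Tendsto (fun n : ℕ => (C n : ℝ) / (n:ℝ)^(Fintype.card (QT K)))
      atTop (nhds (∏ x, (1 / (2 * ((K x : ℝ) + 3))))) := by
    have : ∀ n : ℕ, (C n : ℝ) / (n:ℝ)^(Fintype.card (QT K)) =
        ∏ x, ((n.descFactorial (K x + 3) : ℝ) / (n:ℝ)^(K x + 3) * (1 / (2 * ((K x : ℝ) + 3)))) := by
      intro n
      rw [hC, hq, ← Finset.prod_pow_eq_pow_sum, Nat.cast_prod, ← Finset.prod_div_distrib]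
      refine Finset.prod_congr rfl fun x _ => ?_
      have h := card_can n (K x)
      have h' : ((univ.filter fun c : Fin (K x + 3) → Fin n => IsCan c).card : ℝ) *
        (2 * ((K x : ℝ) + 3)) = n.descFactorial (K x + 3) := by exact_mod_cast h
      rw [← h']
      have : (K x : ℝ) + 3 ≠ 0 := by positivity
      field_simp
    simp_rw [this]
    refine tendsto_finsetProd _ fun x _ => ?_
    simpa using (tendsto_desc (K x + 3)).mul_const (1 / (2 * ((K x : ℝ) + 3)))
  have hle : ∀ n, (setA K n).card ≤ C n := by
    intro n
    refine Finset.card_le_card fun g hg => ?_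
    simp only [setA, mem_filter, mem_univ, true_and] at hg ⊢
    exact hg.1
  have hge : ∀ n, C n + n.descFactorial (Fintype.card (QT K)) ≤
      (setA K n).card + n ^ (Fintype.card (QT K)) := by
    intro n
    rw [← card_inj (QT K) n]
    have h2 : n ^ (Fintype.card (QT K)) = (univ : Finset (QT K → Fin n)).card := by
      simp
    rw [h2, ← Finset.card_union_add_card_inter, add_comm]
    refine add_le_add (Finset.card_le_card fun g hg => ?_)
      (Finset.card_le_card (Finset.subset_univ _))
    simp only [setA, mem_filter, mem_univ, true_and, mem_inter] at hg ⊢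
    exact hg
  have hlow : Tendsto (fun n : ℕ => (C n : ℝ) / (n:ℝ)^(Fintype.card (QT K)) +
      ((n.descFactorial (Fintype.card (QT K)) : ℝ) / (n:ℝ)^(Fintype.card (QT K)) - 1))
      atTop (nhds (∏ x, (1 / (2 * ((K x : ℝ) + 3))))) := by
    simpa using hCt.add ((tendsto_desc (Fintype.card (QT K))).sub_const 1)
  refine tendsto_of_tendsto_of_tendsto_of_le_of_le' hlow hCt ?_ ?_
  · filter_upwards [eventually_gt_atTop 0] with n hn
    have hn' : (0:ℝ) < (n:ℝ)^(Fintype.card (QT K)) := by positivity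
    have h : (C n : ℝ) + n.descFactorial (Fintype.card (QT K)) ≤
      (setA K n).card + (n:ℝ) ^ (Fintype.card (QT K)) := by exact_mod_cast hge n
    have e : (1:ℝ) = (n:ℝ) ^ (Fintype.card (QT K)) / (n:ℝ) ^ (Fintype.card (QT K)) :=
      (div_self hn'.ne').symm
    rw [e, ← sub_div, ← add_div]
    gcongr
    linarith
  · filter_upwards with n
    gcongr
    exact_mod_cast hle n

lemma sum_image_bound (κ : Type*) [Fintype κ] [DecidableEq κ] (n : ℕ) (hn : 0 < n) :
    ∑ g : κ → Fin n, (1 / (n:ℝ)) ^ (univ.image g).card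
      ≤ ∑ v ∈ range (Fintype.card κ + 1), (v:ℝ) ^ (Fintype.card κ) := by
  classical
  have hn' : (0:ℝ) < n := by exact_mod_cast hn
  have hmaps : ∀ g ∈ (univ : Finset (κ → Fin n)),
      (univ.image g).card ∈ range (Fintype.card κ + 1) := by
    intro g _
    rw [mem_range, Nat.lt_succ_iff]
    exact Finset.card_image_le
  rw [← Finset.sum_fiberwise_of_maps_to hmaps]
  refine Finset.sum_le_sum fun v _ => ?_
  have h1 : ∑ g ∈ univ.filter (fun g : κ → Fin n => (univ.image g).card = v),
      (1 / (n:ℝ)) ^ (univ.image g).card =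
      ((univ.filter (fun g : κ → Fin n => (univ.image g).card = v)).card : ℝ) * (1 / (n:ℝ)) ^ v := by
    rw [← nsmul_eq_mul, ← Finset.sum_const]
    refine Finset.sum_congr rfl fun g hg => ?_
    rw [(Finset.mem_filter.1 hg).2]
  have h2 : (univ.filter (fun g : κ → Fin n => (univ.image g).card = v)).card ≤
      n ^ v * v ^ (Fintype.card κ) := by
    have hsub : univ.filter (fun g : κ → Fin n => (univ.image g).card = v) ⊆
        (Finset.powersetCard v (univ : Finset (Fin n))).biUnion
          (fun S => Fintype.piFinset fun _ : κ => S) := by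
      intro g hg
      rw [Finset.mem_biUnion]
      refine ⟨univ.image g, ?_, ?_⟩
      · rw [Finset.mem_powersetCard]
        exact ⟨Finset.subset_univ _, (Finset.mem_filter.1 hg).2⟩
      · rw [Fintype.mem_piFinset]
        intro k
        exact Finset.mem_image_of_mem _ (mem_univ _)
    refine (Finset.card_le_card hsub).trans (Finset.card_biUnion_le.trans ?_)
    have : ∀ S ∈ Finset.powersetCard v (univ : Finset (Fin n)),
        (Fintype.piFinset fun _ : κ => S).card = v ^ (Fintype.card κ) := by
      intro S hS
      rw [Fintype.card_piFinset]
      simp [(Finset.mem_powersetCard.1 hS).2]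
    rw [Finset.sum_congr rfl this, Finset.sum_const, Finset.card_powersetCard, smul_eq_mul]
    refine Nat.mul_le_mul_right _ ?_
    simpa using Nat.choose_le_pow n v
  rw [h1]
  have h2' : ((univ.filter (fun g : κ → Fin n => (univ.image g).card = v)).card : ℝ) ≤
      (n:ℝ) ^ v * (v:ℝ) ^ (Fintype.card κ) := by exact_mod_cast h2
  calc _ ≤ (n:ℝ) ^ v * (v:ℝ) ^ (Fintype.card κ) * (1 / (n:ℝ)) ^ v := by gcongr
    _ = (v:ℝ) ^ (Fintype.card κ) := by
      rw [one_div, inv_pow]; field_simp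

variable [Fintype L] [DecidableEq L] {a b : ℝ} {μ ν : L → ℝ}

lemma tendsto_A (hμ : IsProbVec μ) (hν : IsProbVec ν) (lab : QT K → L) :
    Tendsto (fun n : ℕ => ∑ g ∈ setA K n, Ex n a b μ ν (fun E => if pres lab g E then 1 else 0))
      atTop (nhds (∏ x, xiSBM a b μ ν (fun i => lab ⟨x, i⟩))) := by
  classical
  have hq : Fintype.card (QT K) = ∑ x, (K x + 3) := by simp
  let Z : J → ℝ := fun x => (1/2:ℝ)^(K x + 3) * (∏ i, (a * μ (lab ⟨x, i⟩) + b * ν (lab ⟨x, i⟩))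
        + ∏ i, (a * μ (lab ⟨x, i⟩) - b * ν (lab ⟨x, i⟩)))
  have h1 : ∀ n : ℕ, ∑ g ∈ setA K n, Ex n a b μ ν (fun E => if pres lab g E then 1 else 0)
      = ((setA K n).card : ℝ) / (n:ℝ)^(Fintype.card (QT K)) * ∏ x, Z x := by
    intro n
    have : ∀ g ∈ setA K n, Ex n a b μ ν (fun E => if pres lab g E then 1 else 0)
        = (1 / (n:ℝ)^(Fintype.card (QT K))) * ∏ x, Z x := by
      intro g hg
      simp only [setA, mem_filter, mem_univ, true_and] at hg
      rw [disj_exp a b μ ν hμ hν lab g hg.2, hq, ← Finset.prod_pow_eq_pow_sum,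
        one_div (∏ i, (n:ℝ) ^ (K i + 3)),
        ← Finset.prod_inv_distrib, ← Finset.prod_mul_distrib]
      refine Finset.prod_congr rfl fun x _ => ?_
      have e1 : ∏ i, (a / n * μ (lab ⟨x, i⟩) + b / n * ν (lab ⟨x, i⟩)) =
          ((n:ℝ)^(K x + 3))⁻¹ * ∏ i, (a * μ (lab ⟨x, i⟩) + b * ν (lab ⟨x, i⟩)) := by
        rw [← inv_pow]
        have : ((n:ℝ)⁻¹)^(K x + 3) = ∏ _i : Fin (K x + 3), (n:ℝ)⁻¹ := by simp
        rw [this, ← Finset.prod_mul_distrib]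
        refine Finset.prod_congr rfl fun i _ => ?_
        ring
      have e2 : ∏ i, (a / n * μ (lab ⟨x, i⟩) - b / n * ν (lab ⟨x, i⟩)) =
          ((n:ℝ)^(K x + 3))⁻¹ * ∏ i, (a * μ (lab ⟨x, i⟩) - b * ν (lab ⟨x, i⟩)) := by
        rw [← inv_pow]
        have : ((n:ℝ)⁻¹)^(K x + 3) = ∏ _i : Fin (K x + 3), (n:ℝ)⁻¹ := by simp
        rw [this, ← Finset.prod_mul_distrib]
        refine Finset.prod_congr rfl fun i _ => ?_
        ring
      rw [e1, e2]
      simp only [Z]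
      ring
    rw [Finset.sum_congr rfl this, Finset.sum_const, nsmul_eq_mul]
    ring
  simp_rw [h1]
  have h2 := (tendsto_setA K).mul_const (∏ x, Z x)
  rw [← Finset.prod_mul_distrib] at h2
  convert h2 using 2
  refine Finset.prod_congr rfl fun x _ => ?_
  simp only [xiSBM, Z, one_div, inv_pow]
  push_cast
  have : (K x : ℝ) + 3 ≠ 0 := by positivity
  field_simp
  ring

lemma Ex_nonneg {n : ℕ} (ha : 0 < a) (hb : 0 < b) (hμ : IsProbVec μ) (hν : IsProbVec ν)
    (hna : a ≤ n) (hnb : b ≤ n) (F : EdgeConf n L → ℝ) (hF : ∀ E, 0 ≤ F E) :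
    0 ≤ Ex n a b μ ν F :=
  Finset.sum_nonneg fun x _ => mul_nonneg (mass_nonneg ha hb hμ hν hna hnb x) (hF _)

lemma Ex_mono {n : ℕ} (ha : 0 < a) (hb : 0 < b) (hμ : IsProbVec μ) (hν : IsProbVec ν)
    (hna : a ≤ n) (hnb : b ≤ n) (F G : EdgeConf n L → ℝ) (hF : ∀ E, F E ≤ G E) :
    Ex n a b μ ν F ≤ Ex n a b μ ν G :=
  Finset.sum_le_sum fun x _ =>
    mul_le_mul_of_nonneg_left (hF _) (mass_nonneg ha hb hμ hν hna hnb x)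

lemma Ex_sum {n : ℕ} {ι : Type*} (s : Finset ι) (F : ι → EdgeConf n L → ℝ) :
    Ex n a b μ ν (fun E => ∑ i ∈ s, F i E) = ∑ i ∈ s, Ex n a b μ ν (F i) := by
  unfold Ex
  simp_rw [Finset.mul_sum]
  exact Finset.sum_comm

lemma tendsto_B (ha : 0 < a) (hb : 0 < b) (hμ : IsProbVec μ) (hν : IsProbVec ν) (lab : QT K → L) :
    Tendsto (fun n : ℕ => ∑ g ∈ setB K n, Ex n a b μ ν (fun E => if pres lab g E then 1 else 0))
      atTop (nhds 0) := by
  classical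
  set q := Fintype.card (QT K) with hq
  let M : ℝ := a + b + 1
  let S : ℝ := ∑ v ∈ range (q + 1), (v:ℝ) ^ q
  have hlim : Tendsto (fun n : ℕ => (M ^ (q + 1) * S) / (n:ℝ)) atTop (nhds 0) :=
    tendsto_const_div_atTop_nhds_zero_nat _
  refine tendsto_of_tendsto_of_tendsto_of_le_of_le' tendsto_const_nhds hlim ?_ ?_
  · filter_upwards [eventually_ge_atTop ⌈a⌉₊, eventually_ge_atTop ⌈b⌉₊] with n h1 h2
    exact Finset.sum_nonneg fun g _ => Ex_nonneg ha hb hμ hν (Nat.ceil_le.1 h1) (Nat.ceil_le.1 h2)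
      _ fun E => by split_ifs <;> simp
  · filter_upwards [eventually_ge_atTop ⌈M⌉₊] with n h1
    have hM : M ≤ n := Nat.ceil_le.1 h1
    have hM1 : 1 ≤ M := by simp only [M]; linarith
    have hna : a ≤ n := by simp only [M] at hM; linarith
    have hnb : b ≤ n := by simp only [M] at hM; linarith
    have hn : (0:ℝ) < n := lt_of_lt_of_le ha hna
    have hn' : 0 < n := by exact_mod_cast hn
    have h2 : ∀ g ∈ setB K n, Ex n a b μ ν (fun E => if pres lab g E then 1 else 0) ≤
        M ^ (q+1) / n * (1 / (n:ℝ)) ^ (univ.image g).card := by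
      intro g hg
      simp only [setB, mem_filter, mem_univ, true_and] at hg
      obtain ⟨hg1, hg2, hg3⟩ := hg
      have hc := edge_count g hg1 hg2 hg3
      have hv : (univ.image g).card ≤ q := Finset.card_image_le
      calc _ ≤ ((a + b) / n) ^ (edges g).card := over_exp ha hb hμ hν hna hnb lab g
        _ ≤ (M / n) ^ (edges g).card := by
            have : a + b ≤ M := by simp only [M]; linarith
            gcongr
        _ ≤ (M / n) ^ ((univ.image g).card + 1) :=
            pow_le_pow_of_le_one (by positivity) ((div_le_one hn).2 hM) hc
        _ = M ^ ((univ.image g).card + 1) / n * (1 / (n:ℝ)) ^ (univ.image g).card := by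
            rw [div_pow, pow_succ (n:ℝ), one_div, inv_pow]; field_simp
        _ ≤ _ := by
            have : M ^ ((univ.image g).card + 1) ≤ M ^ (q + 1) :=
              pow_le_pow_right₀ hM1 (by omega)
            gcongr
    calc _ ≤ ∑ g ∈ setB K n, M ^ (q+1) / n * (1 / (n:ℝ)) ^ (univ.image g).card :=
          Finset.sum_le_sum h2
      _ ≤ ∑ g : QT K → Fin n, M ^ (q+1) / n * (1 / (n:ℝ)) ^ (univ.image g).card :=
          Finset.sum_le_sum_of_subset_of_nonneg (Finset.subset_univ _)
            fun g _ _ => by positivity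
      _ = M ^ (q+1) / n * ∑ g : QT K → Fin n, (1 / (n:ℝ)) ^ (univ.image g).card := by
          rw [Finset.mul_sum]
      _ ≤ M ^ (q+1) / n * S := by
          refine mul_le_mul_of_nonneg_left ?_ (by positivity)
          exact sum_image_bound (QT K) n hn'
      _ = _ := by ring

end fam

/-! ### Factorial moments -/

section moments

variable {I : Type*} [Fintype I] (K : I → ℕ)

/-- labels of a family of cycles -/
def famLab (lab : ∀ i, Fin (K i + 3) → L) (r : I → ℕ) :
    QT (fun x : (Σ i, Fin (r i)) => K x.1) → L := fun q => lab q.1.1 q.2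

open Classical in
/-- families counted by the factorial moment -/
noncomputable def setM (lab : ∀ i, Fin (K i + 3) → L) (r : I → ℕ) (n : ℕ) (E : EdgeConf n L) :
    Finset (QT (fun x : (Σ i, Fin (r i)) => K x.1) → Fin n) :=
  univ.filter fun g => ∀ i, (Function.Injective fun (j : Fin (r i)) (t : Fin (K i + 3)) => g ⟨⟨i, j⟩, t⟩) ∧
    ∀ j : Fin (r i), IsCan (fun t => g ⟨⟨i, j⟩, t⟩) ∧
      ∀ t, getLabel E (g ⟨⟨i, j⟩, t⟩) (g ⟨⟨i, j⟩, t + 1⟩) = some (lab i t)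

lemma card_fun_inj {β : Type*} [Fintype β] [DecidableEq β] (r : ℕ) (P : β → Prop) [DecidablePred P]
    [DecidablePred fun h : Fin r → β => Function.Injective h ∧ ∀ j, P (h j)] :
    (univ.filter fun h : Fin r → β => Function.Injective h ∧ ∀ j, P (h j)).card
      = (univ.filter P).card.descFactorial r := by
  classical
  have h1 := Fintype.card_embedding_eq (α := Fin r) (β := {x // P x})
  rw [Fintype.card_fin, Fintype.card_subtype] at h1
  rw [← h1, ← Fintype.card_subtype]
  refine Fintype.card_congr
    { toFun := fun h => ⟨fun j => ⟨h.1 j, h.2.2 j⟩, fun x y e => h.2.1 (Subtype.ext_iff.1 e)⟩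
      invFun := fun f => ⟨fun j => (f j).1, fun x y e => f.injective (Subtype.ext e),
        fun j => (f j).2⟩
      left_inv := fun h => rfl
      right_inv := fun f => rfl }

lemma card_setM [DecidableEq L] (lab : ∀ i, Fin (K i + 3) → L) (r : I → ℕ) (n : ℕ)
    (E : EdgeConf n L) :
    (setM K lab r n E).card = ∏ i, (cycleCount n (K i + 3) E (lab i)).descFactorial (r i) := by
  classical
  have h1 : ∀ i, (cycleCount n (K i + 3) E (lab i)).descFactorial (r i) =
      (univ.filter fun h : Fin (r i) → (Fin (K i + 3) → Fin n) => Function.Injective h ∧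
        ∀ j, (IsCan (h j) ∧ ∀ t, getLabel E (h j t) (h j (t+1)) = some (lab i t))).card := by
    intro i
    rw [cycleCount_eq]
    exact (card_fun_inj (r i) (fun c : Fin (K i + 3) → Fin n =>
      IsCan c ∧ ∀ t, getLabel E (c t) (c (t+1)) = some (lab i t))).symm
  simp_rw [h1]
  rw [← Fintype.card_piFinset]
  let e1 := Equiv.piCurry (fun (x : Σ i, Fin (r i)) (_ : Fin (K x.1 + 3)) => Fin n)
  let e2 := Equiv.piCurry (fun (i : I) (_ : Fin (r i)) => (Fin (K i + 3) → Fin n))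
  refine Finset.card_equiv (e1.trans e2) fun g => ?_
  rw [Fintype.mem_piFinset]
  simp only [setM, mem_univ, true_and, mem_filter]
  rfl

variable [Fintype L] [DecidableEq L] {a b : ℝ} {μ ν : L → ℝ}

lemma tendsto_moments (ha : 0 < a) (hb : 0 < b) (hμ : IsProbVec μ) (hν : IsProbVec ν)
    (lab : ∀ i, Fin (K i + 3) → L)
    (hinj : ∀ i j, K i = K j →
      (∀ t : ℕ, lab i (Fin.ofNat (K i + 3) t) = lab j (Fin.ofNat (K j + 3) t)) → i = j)
    (r : I → ℕ) :
    Tendsto (fun n : ℕ => Ex n a b μ ν (fun E =>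
      ∏ i, ((cycleCount n (K i + 3) E (lab i)).descFactorial (r i) : ℝ))) atTop
      (nhds (∏ i, xiSBM a b μ ν (lab i) ^ r i)) := by
  classical
  let K' : (Σ i, Fin (r i)) → ℕ := fun x => K x.1
  have hA := tendsto_A (a := a) (b := b) K' hμ hν (famLab K lab r)
  have hB := tendsto_B (a := a) (b := b) K' ha hb hμ hν (famLab K lab r)
  have hlim : ∏ x, xiSBM a b μ ν (fun i => famLab K lab r ⟨x, i⟩) =
      ∏ i, xiSBM a b μ ν (lab i) ^ r i := by
    rw [Fintype.prod_sigma]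
    refine Finset.prod_congr rfl fun i _ => ?_
    simp [famLab]
  rw [hlim] at hA
  have hAB := hA.add hB
  rw [add_zero] at hAB
  have hF : ∀ n (E : EdgeConf n L),
      ∏ i, ((cycleCount n (K i + 3) E (lab i)).descFactorial (r i) : ℝ)
        = ((setM K lab r n E).card : ℝ) := by
    intro n E
    rw [card_setM]; push_cast; rfl
  have hS : ∀ n (E : EdgeConf n L) (s : Finset (QT K' → Fin n)),
      ∑ g ∈ s, (if pres (famLab K lab r) g E then (1:ℝ) else 0) =
      ((s.filter fun g => pres (famLab K lab r) g E).card : ℝ) := by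
    intro n E s
    rw [Finset.sum_boole]
  have hpresM : ∀ n (E : EdgeConf n L), ∀ g ∈ setM K lab r n E, pres (famLab K lab r) g E ∧
      (∀ x, IsCan fun i => g ⟨x, i⟩) ∧ ∀ i j j',
      (∀ t : Fin (K i + 3), g ⟨⟨i, j⟩, t⟩ = g ⟨⟨i, j'⟩, t⟩) → j = j' := by
    intro n E g hg
    simp only [setM, mem_filter, mem_univ, true_and] at hg
    refine ⟨?_, ?_, ?_⟩
    · rintro ⟨⟨i, j⟩, t⟩
      exact ((hg i).2 j).2 t
    · rintro ⟨i, j⟩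
      exact ((hg i).2 j).1
    · intro i j j' h
      exact (hg i).1 (funext h)
  have low : ∀ n (E : EdgeConf n L),
      ∑ g ∈ setA K' n, (if pres (famLab K lab r) g E then (1:ℝ) else 0) ≤
      ∏ i, ((cycleCount n (K i + 3) E (lab i)).descFactorial (r i) : ℝ) := by
    intro n E
    rw [hF, hS]
    refine Nat.cast_le.2 (Finset.card_le_card fun g hg => ?_)
    simp only [setA, mem_filter, mem_univ, true_and] at hg
    obtain ⟨⟨h1, h2⟩, h3⟩ := hg
    simp only [setM, mem_filter, mem_univ, true_and]
    intro i
    refine ⟨fun j j' h => ?_, fun j => ⟨h1 ⟨i, j⟩, fun t => h3 ⟨⟨i, j⟩, t⟩⟩⟩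
    have h4 := h2 (congrFun h 0)
    have h5 : (⟨i, j⟩ : Σ i, Fin (r i)) = ⟨i, j'⟩ := congrArg Sigma.fst h4
    exact eq_of_heq (Sigma.mk.inj_iff.1 h5).2
  have up : ∀ n (E : EdgeConf n L),
      ∏ i, ((cycleCount n (K i + 3) E (lab i)).descFactorial (r i) : ℝ) ≤
      ∑ g ∈ setA K' n, (if pres (famLab K lab r) g E then (1:ℝ) else 0) +
      ∑ g ∈ setB K' n, (if pres (famLab K lab r) g E then (1:ℝ) else 0) := by
    intro n E
    rw [hF, hS, hS, ← Nat.cast_add]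
    refine Nat.cast_le.2 (le_trans (Finset.card_le_card fun g hg => ?_)
      (Finset.card_union_le _ _))
    obtain ⟨h1, h2, h3⟩ := hpresM n E g hg
    rw [Finset.mem_union, Finset.mem_filter, Finset.mem_filter]
    by_cases hgi : Function.Injective g
    · left
      refine ⟨?_, h1⟩
      simp only [setA, mem_filter, mem_univ, true_and]
      exact ⟨h2, hgi⟩
    · right
      refine ⟨?_, h1⟩
      simp only [setB, mem_filter, mem_univ, true_and]
      refine ⟨h2, ?_, hgi⟩
      rintro ⟨i, j⟩ ⟨i', j'⟩ hne hK hev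
      have hl : i = i' := by
        refine hinj i i' hK fun t => ?_
        have p1 := h1 ⟨⟨i, j⟩, Fin.ofNat (K i + 3) t⟩
        have p2 := h1 ⟨⟨i', j'⟩, Fin.ofNat (K i' + 3) t⟩
        have q1 := hev t
        have q2 := hev (t+1)
        simp only [ev, ofNat_succ, K'] at q1 q2
        simp only [nx, famLab] at p1 p2
        rw [q1, q2, p2] at p1
        exact (Option.some.inj p1).symm
      subst hl
      apply hne
      have : j = j' := by
        refine h3 i j j' fun t => ?_
        have := hev t.val
        simp only [ev, K'] at this
        rwa [Fin.ofNat_val_eq_self] at this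
      rw [this]
  refine tendsto_of_tendsto_of_tendsto_of_le_of_le' hA hAB ?_ ?_
  · filter_upwards [eventually_ge_atTop ⌈a⌉₊, eventually_ge_atTop ⌈b⌉₊] with n h1 h2
    rw [← Ex_sum]
    exact Ex_mono ha hb hμ hν (Nat.ceil_le.1 h1) (Nat.ceil_le.1 h2) _ _ (low n)
  · filter_upwards [eventually_ge_atTop ⌈a⌉₊, eventually_ge_atTop ⌈b⌉₊] with n h1 h2
    rw [← Ex_sum, ← Ex_sum]
    refine (Ex_mono ha hb hμ hν (Nat.ceil_le.1 h1) (Nat.ceil_le.1 h2) _ _ (up n)).trans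
      (le_of_eq ?_)
    unfold Ex
    simp_rw [mul_add, Finset.sum_add_distrib]

end moments

/-- **Lemma (Cycle counts under the labeled SBM, Lemma 2, second part).**
For any fixed `m ≥ 3`, the cycle counts `{X_n([ℓ]_k) : [ℓ]_k ∈ 𝓛^k, 3 ≤ k ≤ m}`
converge jointly in distribution under `ℙ_n` to independent Poisson random variables
with means `ξ([ℓ]_k)`; since the variables are ℕ-valued, this is expressed as pointwise
convergence of the joint probability mass function. -/
theorem cycle_counts_sbm
    {L : Type*} [Fintype L] [DecidableEq L] (a b : ℝ) (ha : 0 < a) (hb : 0 < b)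
    (μ ν : L → ℝ) (hμ : IsProbVec μ) (hν : IsProbVec ν)
    (m : ℕ) (hm : 3 ≤ m) (target : (k : ℕ) → (Fin k → L) → ℕ) :
    Filter.Tendsto (fun n : ℕ =>
      sbmGraphProb n a b μ ν
        {E | ∀ (k : ℕ), 3 ≤ k → k ≤ m → ∀ ℓ : Fin k → L,
          cycleCount n k E ℓ = target k ℓ})
      Filter.atTop
      (nhds (∏ k ∈ Finset.Icc 3 m, ∏ ℓ : Fin k → L,
        poissonPMF (xiSBM a b μ ν ℓ) (target k ℓ))) := by
  classical
  let I := Σ K : Fin (m - 2), (Fin (K.1 + 3) → L)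
  let KK : I → ℕ := fun i => i.1.1
  let lab : ∀ i : I, Fin (KK i + 3) → L := fun i => i.2
  have hinj : ∀ i j : I, KK i = KK j →
      (∀ t : ℕ, lab i (Fin.ofNat (KK i + 3) t) = lab j (Fin.ofNat (KK j + 3) t)) → i = j := by
    rintro ⟨k, l⟩ ⟨k', l'⟩ hk h
    have hk' : k = k' := Fin.ext hk
    subst hk'
    have : l = l' := by
      funext t
      have := h t.val
      simp only [lab, KK] at this
      rwa [Fin.ofNat_val_eq_self] at this
    rw [this]
  have hmm := moment_method (I := I) (fun n => sbmMass n a b μ ν)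
    (by
      filter_upwards [eventually_ge_atTop ⌈a⌉₊, eventually_ge_atTop ⌈b⌉₊] with n h1 h2
      exact mass_nonneg ha hb hμ hν (Nat.ceil_le.1 h1) (Nat.ceil_le.1 h2))
    (fun n i x => cycleCount n (KK i + 3) x.2 (lab i))
    (fun i => xiSBM a b μ ν (lab i))
    (fun r => tendsto_moments KK ha hb hμ hν lab hinj r)
    (fun i => target (KK i + 3) (lab i))
  have hlim : ∏ i : I, poissonPMF (xiSBM a b μ ν (lab i)) (target (KK i + 3) (lab i)) =
      ∏ k ∈ Finset.Icc 3 m, ∏ ℓ : Fin k → L, poissonPMF (xiSBM a b μ ν ℓ) (target k ℓ) := by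
    rw [Fintype.prod_sigma]
    have h1 : Finset.Icc 3 m = Finset.Ico 3 (m+1) := by
      ext k; simp only [Finset.mem_Icc, Finset.mem_Ico]; omega
    rw [h1, Finset.prod_Ico_eq_prod_range, show m + 1 - 3 = m - 2 by omega, Finset.prod_range]
    refine Finset.prod_congr rfl fun K _ => ?_
    rw [Nat.add_comm 3 K.1]
  rw [hlim] at hmm
  refine hmm.congr fun n => ?_
  unfold sbmGraphProb sbmProb
  refine Finset.sum_congr rfl fun x _ => ?_
  rw [Finset.prod_boole, Set.indicator_apply]
  have hiff : (∀ i ∈ (univ : Finset I), cycleCount n (KK i + 3) x.2 (lab i)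
      = target (KK i + 3) (lab i)) ↔
      x ∈ {x : (Fin n → Bool) × EdgeConf n L | x.2 ∈ {E : EdgeConf n L |
        ∀ (k : ℕ), 3 ≤ k → k ≤ m → ∀ ℓ : Fin k → L, cycleCount n k E ℓ = target k ℓ}} := by
    simp only [Set.mem_setOf_eq]
    constructor
    · intro h k h3 hkm ℓ
      obtain ⟨K, rfl⟩ : ∃ K, k = K + 3 := ⟨k - 3, by omega⟩
      exact h ⟨⟨K, by omega⟩, ℓ⟩ (mem_univ _)
    · rintro h ⟨⟨K, hK⟩, ℓ⟩ -
      exact h (K + 3) (by omega) (by omega) ℓ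
  by_cases hc : x ∈ {x : (Fin n → Bool) × EdgeConf n L | x.2 ∈ {E : EdgeConf n L |
        ∀ (k : ℕ), 3 ≤ k → k ≤ m → ∀ ℓ : Fin k → L, cycleCount n k E ℓ = target k ℓ}}
  · rw [if_pos (hiff.2 hc), if_pos hc, mul_one]
  · rw [if_neg (fun h => hc (hiff.1 h)), if_neg hc, mul_zero]



end LSBM
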